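/- arXiv:2209.11339 — 5 statements merged into one kernel-verified Lean document; each statement's English description precedes it below -/
import Mathlib

section
/- Let L and M be complete lattices and let f : L → M be a surjective map that preserves arbitrary suprema (f (sSup s) = sSup (f '' s) for every s ⊆ L). Then a subset U of M is Scott-open if and only if its preimage f⁻¹(U) is Scott-open in L. Equivalently, the Scott topology on M coincides with the quotient (coinduced) topology along f when L carries its Scott topology. -/
open TopologicalSpace

/-- A subset of a complete lattice is Scott-open if it is an upper set and every nonempty
directed set whose supremum lies in it meets it. -/
def ScottOpen {α : Type*} [CompleteLattice α] (U : Set α) : Prop :=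
  IsUpperSet U ∧
    ∀ d : Set α, d.Nonempty → DirectedOn (· ≤ ·) d → sSup d ∈ U → (d ∩ U).Nonempty

/-- The Scott topology on a complete lattice. -/
def scottTopology (α : Type*) [CompleteLattice α] : TopologicalSpace α where
  IsOpen := ScottOpen
  isOpen_univ := ⟨isUpperSet_univ, fun d hd _ _ => by simpa using hd⟩
  isOpen_inter := by
    rintro U V ⟨hU, hU'⟩ ⟨hV, hV'⟩
    refine ⟨hU.inter hV, fun d hd hdir hsup => ?_⟩
    obtain ⟨a, ha, haU⟩ := hU' d hd hdir hsup.1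
    obtain ⟨b, hb, hbV⟩ := hV' d hd hdir hsup.2
    obtain ⟨c, hc, hac, hbc⟩ := hdir a ha b hb
    exact ⟨c, hc, hU hac haU, hV hbc hbV⟩
  isOpen_sUnion := by
    intro S hS
    refine ⟨isUpperSet_sUnion fun s hs => (hS s hs).1, fun d hd hdir hsup => ?_⟩
    obtain ⟨U, hU, hmem⟩ := hsup
    obtain ⟨a, ha, haU⟩ := (hS U hU).2 d hd hdir hmem
    exact ⟨a, ha, U, hU, haU⟩

/-!
A supremum-preserving map `f` has an upper adjoint, which is a monotone section of `f` when `f` is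
surjective. Preimages under the Scott-continuous map `f` preserve Scott-openness. Conversely, the
section `g` carries a directed set `d` to a directed set `g '' d`, and `f (sSup (g '' d))` lies
above `sSup d`, so Scott-openness of `f ⁻¹' U` can be tested on `g '' d` to obtain that of `U`.
-/

section

variable {L M : Type*} [CompleteLattice L] [CompleteLattice M] {f : L → M} {g : M → L} {U : Set M}

theorem ScottOpen.preimage (hU : ScottOpen U) (hf : ScottContinuous f) : ScottOpen (f ⁻¹' U) := by
  refine ⟨hU.1.preimage hf.monotone, fun d hd hdir hdU => ?_⟩
  have himage : sSup (f '' d) ∈ U := hf.map_sSup hd hdir ▸ hdU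
  obtain ⟨_, ⟨x, hx, rfl⟩, hxU⟩ := hU.2 (f '' d) (hd.image f) (hdir.mono_comp hf.monotone) himage
  exact ⟨x, hx, hxU⟩

theorem ScottOpen.of_preimage (hU : ScottOpen (f ⁻¹' U)) (hf : Monotone f) (hg : Monotone g)
    (hgf : Function.RightInverse g f) : ScottOpen U := by
  have hpre : g ⁻¹' (f ⁻¹' U) = U := hgf.preimage_preimage U
  have hupper : IsUpperSet U := hpre ▸ hU.1.preimage hg
  refine ⟨hupper, fun d hd hdir hdU => ?_⟩
  have hle : sSup d ≤ f (sSup (g '' d)) := by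
    simpa only [← sSup_image, hgf.image_image] using hf.le_map_sSup (s := g '' d)
  obtain ⟨_, ⟨y, hy, rfl⟩, hyU⟩ :=
    hU.2 (g '' d) (hd.image g) (hdir.mono_comp hg) (hupper hle hdU)
  exact ⟨y, hy, hpre.subset hyU⟩

theorem galoisConnection_of_map_sSup (hf : ∀ s : Set L, f (sSup s) = sSup (f '' s)) :
    GaloisConnection f fun y => sSup {x | f x ≤ y} := by
  have hmono : Monotone f := (ScottContinuous.of_map_sSup fun s _ _ => hf s).monotone
  refine fun x y => ⟨fun hxy => le_sSup hxy, fun hxy => ?_⟩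
  calc
    f x ≤ f (sSup {x | f x ≤ y}) := hmono hxy
    _ = sSup (f '' {x | f x ≤ y}) := hf _
    _ ≤ y := sSup_le (Set.forall_mem_image.2 fun _ hz => hz)

theorem exists_monotone_rightInverse_of_map_sSup (hsurj : Function.Surjective f)
    (hf : ∀ s : Set L, f (sSup s) = sSup (f '' s)) :
    ∃ g : M → L, Monotone g ∧ Function.RightInverse g f :=
  have gc := galoisConnection_of_map_sSup hf
  ⟨_, gc.monotone_u, hsurj.forall.2 gc.l_u_l_eq_l⟩

theorem scottOpen_iff_preimage_scottOpen_of_sSup_surjective_general (hf : ScottContinuous f)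
    (hg : Monotone g) (hgf : Function.RightInverse g f) (U : Set M) :
    ScottOpen U ↔ ScottOpen (f ⁻¹' U) :=
  ⟨fun hU => hU.preimage hf, fun hU => hU.of_preimage hf.monotone hg hgf⟩

end

/-- If `f : L → M` is a surjective map between complete lattices preserving
arbitrary suprema, then `U ⊆ M` is Scott-open iff `f ⁻¹' U` is Scott-open; i.e. the Scott
topology on `M` is the quotient topology along `f`. -/
theorem scottOpen_iff_preimage_scottOpen_of_sSup_surjective
    {L M : Type*} [CompleteLattice L] [CompleteLattice M] (f : L → M)
    (hsurj : Function.Surjective f) (hsup : ∀ s : Set L, f (sSup s) = sSup (f '' s)) :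
    ∀ U : Set M, ScottOpen U ↔ ScottOpen (f ⁻¹' U) := by
  obtain ⟨_, hg, hgf⟩ := exists_monotone_rightInverse_of_map_sSup hsurj hsup
  exact scottOpen_iff_preimage_scottOpen_of_sSup_surjective_general
    (.of_map_sSup fun d _ _ => hsup d) hg hgf
end

section
/- Let G be a type. The evaluation map ev : Opens (G → Prop) × (G → Prop) → Prop, (U, f) ↦ (f ∈ U), is continuous, where G → Prop carries the product topology (each factor Prop having the Sierpiński topology), Opens (G → Prop) carries the Scott topology, and Prop carries the Sierpiński topology. Equivalently, the set {(U, f) | f ∈ U} is open in the product of the Scott topology and the product topology. -/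
open TopologicalSpace

/-! The opens containing a fixed compact set `K` form a Scott-open family, since a directed open
cover of `K` has a single member covering `K`. If `x ∈ U`, local compactness provides a compact `K`
with `x ∈ interior K` and `K ⊆ U`; then `{V | K ⊆ V} ×ˢ interior K` is a neighbourhood of `(U, x)`
on which membership holds. The space `G → Prop` is locally compact because `Prop` is finite: it is
locally compact and compact, and a product of such spaces is locally compact. -/

theorem scottOpen_setOf_subset_of_isCompact {X : Type*} [TopologicalSpace X] {K : Set X}
    (hK : IsCompact K) : ScottOpen {U : Opens X | K ⊆ U} := by
  refine ⟨fun U V hUV hKU => Set.Subset.trans hKU hUV, fun d hd hdir hsup => ?_⟩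
  have : Nonempty d := hd.to_subtype
  have hcover : K ⊆ ⋃ U : d, (U.1 : Set X) := by
    simpa only [Set.mem_ofPred_eq, Opens.coe_sSup, Set.biUnion_eq_iUnion] using hsup
  obtain ⟨U, hKU⟩ :=
    hK.elim_directed_cover _ (fun U : d => U.1.isOpen) hcover hdir.directed_val
  exact ⟨U, U.2, hKU⟩

theorem continuous_eval_opens_pi_prop_general (X : Type*) [TopologicalSpace X]
    [LocallyCompactSpace X] :
    letI : TopologicalSpace (Opens X) := scottTopology (Opens X)
    Continuous (fun p : Opens X × X => p.2 ∈ p.1) := by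
  let : TopologicalSpace (Opens X) := scottTopology (Opens X)
  refine continuous_Prop.2 (isOpen_iff_mem_nhds.2 ?_)
  rintro ⟨U, x⟩ hxU
  obtain ⟨K, hK, hxK, hKU⟩ := exists_compact_subset U.isOpen hxU
  have hopen : IsOpen {V : Opens X | K ⊆ V} := scottOpen_setOf_subset_of_isCompact hK
  filter_upwards [prod_mem_nhds (hopen.mem_nhds hKU) (isOpen_interior.mem_nhds hxK)]
  rintro ⟨V, y⟩ ⟨hKV, hyK⟩
  exact hKV (interior_subset hyK)

/-- The evaluation map `(U, f) ↦ (f ∈ U)` is continuous on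
`Opens (G → Prop) × (G → Prop)` when the lattice of opens carries the Scott topology. -/
theorem continuous_eval_opens_pi_prop (G : Type*) :
    letI : TopologicalSpace (Opens (G → Prop)) := scottTopology (Opens (G → Prop))
    Continuous (fun p : Opens (G → Prop) × (G → Prop) => p.2 ∈ p.1) :=
  continuous_eval_opens_pi_prop_general (G → Prop)
end

section
/- Let X be a topological space and G a family of open subsets of X that is a subbasis for its topology, and let i : X → (G → Prop) be the continuous map i x g = (x ∈ g). Then for every topological space A and every continuous map u : A × X → Prop there exists a continuous map v : A → Opens (G → Prop) (with Opens (G → Prop) carrying the Scott topology) such that for all a ∈ A and x ∈ X, u (a, x) holds if and only if i x ∈ v a. (Machine space Σ^{Σ^G} together with the evaluation (m, x) ↦ (i x ∈ m) is a weak exponential of Σ by X.) -/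
open TopologicalSpace

/-- The canonical map from a space into `Σ^G` for a family `G` of subsets. -/
def iMap {X : Type*} (G : Set (Set X)) : X → (↥G → Prop) := fun x g => x ∈ (g : Set X)

/-!
A map `f` from a space `A` into a complete lattice is continuous for the Scott topology as soon as
`f a ≤ liminf f (𝓝 a)` for all `a`, because the liminf is the supremum of the directed set of
eventual lower bounds of `f`. The slices `W a = {y | (a, y) ∈ W}` of an open `W ⊆ A × Y` satisfy
this inequality: each `y ∈ W a` has an open neighbourhood that is contained in `W b` for all `b`
near `a`. So every open subset of `A × Y` is classified by a continuous map `A → Opens Y`. When `X`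
carries the topology induced by `i : X → Y`, every open subset of `A × X` is the preimage of an open
subset of `A × Y`, and its classifying map therefore extends along `i`. A subbasis `G` is exactly
what makes the topology of `X` induced from `Σ^G`.
-/

open Filter Set Topology

section Scott

variable {α : Type*} [CompleteLattice α]

theorem ScottOpen.eventually_mem_of_liminf_mem {ι : Type*} {U : Set α} (hU : ScottOpen U)
    {l : Filter ι} {f : ι → α} (h : liminf f l ∈ U) : ∀ᶠ i in l, f i ∈ U := by
  rw [liminf_eq] at h
  have bot_mem : ∀ᶠ i in l, ⊥ ≤ f i := .of_forall fun _ => bot_le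
  have directed : DirectedOn (· ≤ ·) {c | ∀ᶠ i in l, c ≤ f i} := fun c hc d hd =>
    ⟨c ⊔ d, (hc.and hd).mono fun _ h => sup_le h.1 h.2, le_sup_left, le_sup_right⟩
  obtain ⟨c, hc, hcU⟩ := hU.2 _ ⟨⊥, bot_mem⟩ directed h
  exact hc.mono fun _ hci => hU.1 hci hcU

theorem continuous_scottTopology_of_le_liminf {A : Type*} [TopologicalSpace A] {f : A → α}
    (hf : ∀ a, f a ≤ liminf f (𝓝 a)) : Continuous[_, scottTopology α] f := by
  let _ : TopologicalSpace α := scottTopology α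
  refine continuous_def.2 fun U (hU : ScottOpen U) => isOpen_iff_mem_nhds.2 fun a ha => ?_
  exact hU.eventually_mem_of_liminf_mem (hU.1 (hf a) ha)

end Scott

section Slice

variable {A Y : Type*} [TopologicalSpace A] [TopologicalSpace Y]

/-- The slice `{y | (a, y) ∈ W}` of an open subset `W` of a product. As a function of `a`, it is
the map into `Opens Y` that classifies `W`. -/
def openSlice (W : Opens (A × Y)) (a : A) : Opens Y :=
  ⟨{y | (a, y) ∈ W}, W.isOpen.preimage (.prodMk_right a)⟩

theorem openSlice_le_liminf (W : Opens (A × Y)) (a : A) :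
    openSlice W a ≤ liminf (openSlice W) (𝓝 a) := by
  intro y hy
  obtain ⟨N, V, hN, hV, haN, hyV, hNV⟩ := isOpen_prod_iff.1 W.isOpen a y hy
  have hVW : ∀ᶠ b in 𝓝 a, (⟨V, hV⟩ : Opens Y) ≤ openSlice W b :=
    (hN.eventually_mem haN).mono fun b hb z hz => hNV ⟨hb, hz⟩
  have hV_le : ⟨V, hV⟩ ≤ liminf (openSlice W) (𝓝 a) := le_liminf_of_le (h := hVW)
  exact hV_le hyV

theorem continuous_openSlice (W : Opens (A × Y)) :
    Continuous[_, scottTopology (Opens Y)] (openSlice W) :=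
  continuous_scottTopology_of_le_liminf (openSlice_le_liminf W)

end Slice

theorem induced_mem_sierpinskiSpace {X : Type*} (s : Set X) :
    induced (· ∈ s) sierpinskiSpace = generateFrom {s} := by
  have preimage_true : (· ∈ s) ⁻¹' {True} = s := by ext; simp
  rw [sierpinskiSpace, induced_generateFrom_eq, image_singleton, preimage_true]

theorem induced_iMap {X : Type*} (G : Set (Set X)) :
    induced (iMap G) inferInstance = generateFrom G := calc
  induced (iMap G) inferInstance = ⨅ g : G, induced (· ∈ (g : Set X)) sierpinskiSpace :=
    induced_to_pi _
  _ = ⨅ g : G, generateFrom {(g : Set X)} := by simp only [induced_mem_sierpinskiSpace]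
  _ = generateFrom G := by
    rw [← generateFrom_iUnion, iUnion_singleton_eq_range, Subtype.range_coe]

theorem machine_space_weak_exponential_general {A X Y : Type*} [TopologicalSpace A]
    [TopologicalSpace X] [TopologicalSpace Y] {i : X → Y} (hi : IsInducing i)
    {u : A × X → Prop} (hu : Continuous u) :
    ∃ v : A → Opens Y, Continuous[_, scottTopology (Opens Y)] v ∧
      ∀ (a : A) (x : X), u (a, x) ↔ i x ∈ v a := by
  obtain ⟨W, hW, hWu⟩ : ∃ W : Set (A × Y), IsOpen W ∧ Prod.map id i ⁻¹' W = {p | u p} :=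
    (IsInducing.id.prodMap hi).isOpen_iff.1 (continuous_Prop.1 hu)
  exact ⟨openSlice ⟨W, hW⟩, continuous_openSlice _, fun a x => (Set.ext_iff.1 hWu (a, x)).symm⟩

/-- Machine space `Σ^{Σ^G}` with evaluation `(m, x) ↦ (i x ∈ m)` is a weak
exponential of `Σ` by `X`: every continuous `u : A × X → Prop` factors through it. -/
theorem machine_space_weak_exponential {X : Type*} [tX : TopologicalSpace X]
    (G : Set (Set X)) (hG : tX = TopologicalSpace.generateFrom G)
    (A : Type*) [TopologicalSpace A] (u : A × X → Prop) (hu : Continuous u) :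
    letI : TopologicalSpace (Opens (↥G → Prop)) := scottTopology (Opens (↥G → Prop))
    ∃ v : A → Opens (↥G → Prop), Continuous v ∧
      ∀ (a : A) (x : X), u (a, x) ↔ iMap G x ∈ v a :=
  machine_space_weak_exponential_general ⟨hG.trans (induced_iMap G).symm⟩ hu
end

section
/- Let X be a topological space and G a family of open subsets of X that is a subbasis for its topology, let i : X → (G → Prop) be the map i x g = (x ∈ g), and let q̄ : Opens (G → Prop) → Opens X be the map U ↦ i⁻¹(U). Suppose the evaluation map ev : Opens X × X → Prop, (U, x) ↦ (x ∈ U), is continuous when Opens X carries the Scott topology (as holds when X is locally compact). Then there exists a continuous map s : Opens X → Opens (G → Prop) (Scott topologies on both sides) such that q̄ ∘ s is the identity on Opens X and for all U ∈ Opens X and x ∈ X one has (i x ∈ s U) if and only if x ∈ U. -/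
open TopologicalSpace

/-!
Continuity of evaluation says that each point of an open set `U` has an open neighbourhood `V`
such that `U` is a Scott-interior point of `{W | V ≤ W}`; write `V ≪ U` for the latter relation.
Thus every `U` is the supremum of the `V ≪ U`. Since `i` is inducing, each such `V` is `q̄ w` for
some open `w` of the machine space, so `s U = sSup {w | q̄ w ≪ U}` is sent back to `U` by the
sup-preserving map `q̄`. Scott-openness is exactly what makes `s` preserve directed suprema.
-/

open Function Topology

section CompleteLattice

variable {α β : Type*} [CompleteLattice α] [CompleteLattice β]

theorem scottOpen_iff_isUpperSet_and_dirSupInacc {U : Set α} :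
    ScottOpen U ↔ IsUpperSet U ∧ DirSupInacc U :=
  and_congr_right' dirSupInacc_iff_forall_sSup.symm

theorem isScott_scottTopology (α : Type*) [CompleteLattice α] :
    @IsScott α Set.univ _ (scottTopology α) := by
  have hscott : @IsScott α Set.univ _ (scott α Set.univ) := @IsScott.mk _ _ _ (scott α Set.univ) rfl
  refine @IsScott.mk _ _ _ (scottTopology α) (TopologicalSpace.ext_iff.2 fun U => ?_)
  rw [@IsScott.isOpen_iff_isUpperSet_and_dirSupInaccOn _ _ _ (scott α Set.univ) _ hscott,
    dirSupInaccOn_univ]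
  exact scottOpen_iff_isUpperSet_and_dirSupInacc

theorem continuous_scottTopology_of_scottContinuous {f : α → β} (hf : ScottContinuous f) :
    Continuous[scottTopology α, scottTopology β] f := by
  let _ := scottTopology α
  let _ := scottTopology β
  have := isScott_scottTopology α
  have := isScott_scottTopology β
  exact (IsScott.scottContinuousOn_iff_continuous fun _ _ _ => Set.mem_univ _).1
    hf.scottContinuousOn

/-- `ScottBelow a b` means that `b` is an interior point of the principal upper set of `a` in the
Scott topology. It implies the way-below relation, and coincides with it in a continuous
lattice. -/
def ScottBelow (a b : α) : Prop :=
  ∃ O ⊆ Set.Ici a, ScottOpen O ∧ b ∈ O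

namespace ScottBelow

theorem le {a b : α} : ScottBelow a b → a ≤ b := fun ⟨_, hOa, _, hb⟩ => hOa hb

theorem trans_le {a b c : α} : ScottBelow a b → b ≤ c → ScottBelow a c :=
  fun ⟨O, hOa, hO, hb⟩ hbc => ⟨O, hOa, hO, hO.1 hbc hb⟩

theorem exists_mem_of_isLUB {a b : α} {d : Set α} (hab : ScottBelow a b) (hne : d.Nonempty)
    (hd : DirectedOn (· ≤ ·) d) (hb : IsLUB d b) : ∃ c ∈ d, ScottBelow a c := by
  obtain ⟨O, hOa, hO, hbO⟩ := hab
  obtain ⟨c, hc, hcO⟩ := hO.2 d hne hd (hb.sSup_eq.symm ▸ hbO)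
  exact ⟨c, hc, O, hOa, hO, hcO⟩

end ScottBelow

/-- The candidate section of a map `φ : β → α` of complete lattices, sending `a` to the supremum
of all `w` whose image is Scott-below `a`. For `φ = q̄` it is the section of the machine-space
quotient. -/
def scottSection (φ : β → α) (a : α) : β :=
  sSup {w | ScottBelow (φ w) a}

theorem scottSection_mono (φ : β → α) : Monotone (scottSection φ) :=
  fun _ _ hab => sSup_le_sSup fun _ hw => hw.trans_le hab

theorem scottContinuous_scottSection (φ : β → α) : ScottContinuous (scottSection φ) := by
  intro d hne hd a ha
  refine ⟨(scottSection_mono φ).mem_upperBounds_image ha.1, fun u hu => sSup_le fun w hw => ?_⟩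
  obtain ⟨c, hc, hwc⟩ := ScottBelow.exists_mem_of_isLUB hw hne hd ha
  calc w ≤ scottSection φ c := le_sSup hwc
    _ ≤ u := hu (Set.mem_image_of_mem _ hc)

theorem map_scottSection {F : Type*} [FunLike F β α] [sSupHomClass F β α] {φ : F}
    (hφ : Surjective φ) {a : α} (ha : IsLUB {c | ScottBelow c a} a) :
    φ (scottSection φ a) = a := by
  calc φ (scottSection φ a) = sSup (φ '' (φ ⁻¹' {c | ScottBelow c a})) := map_sSup φ _
    _ = sSup {c | ScottBelow c a} := by rw [Set.image_preimage_eq _ hφ]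
    _ = a := ha.sSup_eq

end CompleteLattice

section Opens

variable {X Y : Type*} [TopologicalSpace X] [TopologicalSpace Y]

theorem exists_mem_scottBelow_of_continuous_eval
    (hev : letI : TopologicalSpace (Opens X) := scottTopology (Opens X)
      Continuous (fun p : Opens X × X => p.2 ∈ p.1))
    {U : Opens X} {x : X} (hx : x ∈ U) : ∃ V : Opens X, x ∈ V ∧ ScottBelow V U := by
  let _ : TopologicalSpace (Opens X) := scottTopology (Opens X)
  have hopen : IsOpen {p : Opens X × X | p.2 ∈ p.1} := continuous_Prop.1 hev
  obtain ⟨O, N, hO, hN, hUO, hxN, hsub⟩ := isOpen_prod_iff.1 hopen U x hx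
  exact ⟨⟨N, hN⟩, hxN, O, fun W hW y hy => hsub (Set.mk_mem_prod hW hy), hO, hUO⟩

theorem isLUB_scottBelow_of_continuous_eval
    (hev : letI : TopologicalSpace (Opens X) := scottTopology (Opens X)
      Continuous (fun p : Opens X × X => p.2 ∈ p.1))
    (U : Opens X) : IsLUB {V | ScottBelow V U} U := by
  refine ⟨fun V hV => hV.le, fun W hW x hx => ?_⟩
  obtain ⟨V, hxV, hVU⟩ := exists_mem_scottBelow_of_continuous_eval hev hx
  exact hW hVU hxV

theorem opensComap_surjective_of_isInducing {i : C(X, Y)} (hi : IsInducing i) :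
    Surjective (Opens.comap i) := fun U =>
  let ⟨W, hW, hWU⟩ := hi.isOpen_iff.1 U.isOpen
  ⟨⟨W, hW⟩, Opens.ext hWU⟩

theorem machine_space_quotient_has_section_general {i : C(X, Y)} (hi : IsInducing i)
    (hev : letI : TopologicalSpace (Opens X) := scottTopology (Opens X)
      Continuous (fun p : Opens X × X => p.2 ∈ p.1)) :
    ∃ s : Opens X → Opens Y, Continuous[scottTopology (Opens X), scottTopology (Opens Y)] s ∧
      (∀ U : Opens X, Opens.comap i (s U) = U) ∧ ∀ (U : Opens X) (x : X), i x ∈ s U ↔ x ∈ U := by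
  have comap_section (U : Opens X) : Opens.comap i (scottSection (Opens.comap i) U) = U :=
    map_scottSection (opensComap_surjective_of_isInducing hi)
      (isLUB_scottBelow_of_continuous_eval hev U)
  have continuous_section := continuous_scottTopology_of_scottContinuous
    (scottContinuous_scottSection (Opens.comap i))
  refine ⟨scottSection (Opens.comap i), continuous_section, comap_section, fun U x => ?_⟩
  rw [← Opens.mem_comap, comap_section]

end Opens

theorem isInducing_iMap {X : Type*} [tX : TopologicalSpace X] {G : Set (Set X)}
    (hG : tX = generateFrom G) : IsInducing (iMap G) := by
  have hcont : Continuous (iMap G) := continuous_pi fun g =>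
    continuous_Prop.2 (hG ▸ isOpen_generateFrom_of_mem g.2)
  refine ⟨le_antisymm hcont.le_induced ?_⟩
  rw [hG]
  refine le_generateFrom fun g hg => isOpen_induced_iff.2 ⟨{p | p ⟨g, hg⟩}, ?_, rfl⟩
  exact continuous_Prop.1 (continuous_apply (⟨g, hg⟩ : ↥G))

/-- If the evaluation map of `Opens X` (Scott topology) is continuous (as holds
for locally compact `X`), then the machine-space quotient `q̄ = Opens.comap i` has a
continuous section `s` compatible with evaluation. -/
theorem machine_space_quotient_has_section {X : Type*} [tX : TopologicalSpace X]
    (G : Set (Set X)) (hG : tX = TopologicalSpace.generateFrom G)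
    (hi : Continuous (iMap G))
    (hev : letI : TopologicalSpace (Opens X) := scottTopology (Opens X)
      Continuous (fun p : Opens X × X => p.2 ∈ p.1)) :
    letI : TopologicalSpace (Opens X) := scottTopology (Opens X)
    letI : TopologicalSpace (Opens (↥G → Prop)) := scottTopology (Opens (↥G → Prop))
    ∃ s : Opens X → Opens (↥G → Prop), Continuous s ∧
      (∀ U : Opens X, Opens.comap ⟨iMap G, hi⟩ (s U) = U) ∧
      ∀ (U : Opens X) (x : X), iMap G x ∈ s U ↔ x ∈ U :=
  machine_space_quotient_has_section_general (i := ⟨iMap G, hi⟩) (isInducing_iMap hG) hev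
end

section
/- Let X be a topological space and G a family of open subsets of X that is a subbasis for its topology, let i : X → (G → Prop) be the map i x g = (x ∈ g), and let q̄ : Opens (G → Prop) → Opens X be the map U ↦ i⁻¹(U). If q̄ has a continuous section s : Opens X → Opens (G → Prop) (i.e. s is continuous for the Scott topologies on both sides and q̄ ∘ s = id), then the frame Opens X is a continuous lattice: for every open U, U = sSup {V ∈ Opens X | V ≪ U}, where V ≪ U means that every nonempty directed family D ⊆ Opens X with U ≤ sSup D contains some W with V ≤ W. (That is, X is locally compact in the localic/core-compact sense.) -/
open TopologicalSpace

/-- The way-below relation on a complete lattice. -/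
def WayBelow {α : Type*} [CompleteLattice α] (b a : α) : Prop :=
  ∀ d : Set α, d.Nonempty → DirectedOn (· ≤ ·) d → a ≤ sSup d → ∃ c ∈ d, b ≤ c

/-!
A Scott-continuous retract of a continuous lattice is continuous: if `r ∘ s = id`, then `r` maps
the elements way below `s x` to elements way below `x`, and their images have supremum
`r (s x) = x`. This applies to `r = q̄`, which preserves all suprema, because `Σ^G`, as a product of
compact, locally compact spaces, is locally compact, so that `Opens (Σ^G)` is a continuous lattice.
-/

section WayBelow

variable {α : Type*} [CompleteLattice α] {a b c : α}

theorem WayBelow.le (h : WayBelow b a) : b ≤ a := by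
  obtain ⟨c, rfl, hbc⟩ :=
    h {a} (Set.singleton_nonempty a) (directedOn_singleton a) sSup_singleton.ge
  exact hbc

theorem bot_wayBelow (a : α) : WayBelow ⊥ a := fun _ ⟨c, hc⟩ _ _ => ⟨c, hc, bot_le⟩

theorem WayBelow.sup (hb : WayBelow b a) (hc : WayBelow c a) : WayBelow (b ⊔ c) a := by
  intro d hne hdir hle
  obtain ⟨x, hx, hbx⟩ := hb d hne hdir hle
  obtain ⟨y, hy, hcy⟩ := hc d hne hdir hle
  obtain ⟨z, hz, hxz, hyz⟩ := hdir x hx y hy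
  exact ⟨z, hz, sup_le (hbx.trans hxz) (hcy.trans hyz)⟩

theorem directedOn_setOf_wayBelow (a : α) : DirectedOn (· ≤ ·) {b | WayBelow b a} :=
  fun b hb c hc => ⟨b ⊔ c, WayBelow.sup hb hc, le_sup_left, le_sup_right⟩

/-- A continuous lattice: a complete lattice in which every element is the supremum of the
elements way below it. -/
def IsContinuousLattice (α : Type*) [CompleteLattice α] : Prop :=
  ∀ a : α, a = sSup {b | WayBelow b a}

end WayBelow

section Scott

variable {α β : Type*} [CompleteLattice α] [CompleteLattice β]

theorem scottTopology_eq_scott (α : Type*) [CompleteLattice α] :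
    scottTopology α = Topology.scott α Set.univ := by
  ext U
  let : TopologicalSpace α := Topology.scott α Set.univ
  have : Topology.IsScott α Set.univ := ⟨rfl⟩
  rw [Topology.IsScott.isOpen_iff_isUpperSet_and_dirSupInaccOn (α := α) (D := Set.univ),
    dirSupInaccOn_univ, dirSupInacc_iff_forall_sSup]
  exact Iff.rfl

theorem scottContinuous_iff_continuous_scottTopology {f : α → β} :
    ScottContinuous f ↔ @Continuous _ _ (scottTopology α) (scottTopology β) f := by
  let := scottTopology α
  let := scottTopology β
  have : Topology.IsScott α Set.univ := ⟨scottTopology_eq_scott α⟩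
  have : Topology.IsScott β Set.univ := ⟨scottTopology_eq_scott β⟩
  rw [← scottContinuousOn_univ]
  exact Topology.IsScott.scottContinuousOn_iff_continuous fun _ _ _ => Set.mem_univ _

theorem scottContinuous_of_sSupHomClass {F : Type*} [FunLike F α β] [sSupHomClass F α β] (f : F) :
    ScottContinuous f :=
  ScottContinuous.of_map_sSup fun d _ _ => map_sSup f d

theorem WayBelow.map_of_comp_le_id {r : α → β} {s : β → α} (hr : Monotone r)
    (hs : ScottContinuous s) (hrs : r ∘ s ≤ id) {a : α} {x : β} (h : WayBelow a (s x)) :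
    WayBelow (r a) x := by
  intro d hne hdir hle
  have hsd : s x ≤ sSup (s '' d) :=
    (hs.monotone hle).trans_eq (hs.map_sSup hne hdir)
  obtain ⟨_, ⟨y, hy, rfl⟩, hay⟩ :=
    h (s '' d) (hne.image s) (hdir.mono_comp hs.monotone) hsd
  exact ⟨y, hy, (hr hay).trans (hrs y)⟩

theorem IsContinuousLattice.of_leftInverse (hα : IsContinuousLattice α) {r : α → β} {s : β → α}
    (hr : ScottContinuous r) (hs : ScottContinuous s) (hrs : Function.LeftInverse r s) :
    IsContinuousLattice β := by
  intro x
  refine le_antisymm ?_ (sSup_le fun _ hb => hb.le)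
  calc
    x = r (s x) := (hrs x).symm
    _ = r (sSup {a | WayBelow a (s x)}) := congrArg r (hα (s x))
    _ = sSup (r '' {a | WayBelow a (s x)}) :=
      hr.map_sSup ⟨⊥, bot_wayBelow _⟩ (directedOn_setOf_wayBelow _)
    _ ≤ sSup {b | WayBelow b x} :=
      sSup_le_sSup <| Set.image_subset_iff.2 fun _ ha =>
        WayBelow.map_of_comp_le_id hr.monotone hs (fun y => (hrs y).le) ha

end Scott

section Opens

variable {X Y : Type*} [TopologicalSpace X] [TopologicalSpace Y]

theorem wayBelow_of_subset_isCompact {V U : Opens Y} {K : Set Y} (hK : IsCompact K)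
    (hVK : (V : Set Y) ⊆ K) (hKU : K ⊆ U) : WayBelow V U := by
  intro d hne hdir hle
  have hcover : K ⊆ ⋃ W : d, (W : Set Y) := by
    simpa only [Opens.coe_sSup, Set.biUnion_eq_iUnion] using
      hKU.trans (SetLike.coe_subset_coe.2 hle)
  have := hne.to_subtype
  obtain ⟨W, hKW⟩ := hK.elim_directed_cover (fun W : d => (W : Set Y)) (fun W => W.1.isOpen) hcover
    hdir.directed_val
  exact ⟨W, W.2, hVK.trans hKW⟩

theorem isContinuousLattice_opens (Y : Type*) [TopologicalSpace Y] [LocallyCompactSpace Y] :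
    IsContinuousLattice (Opens Y) := by
  intro U
  refine le_antisymm (fun y hy => ?_) (sSup_le fun _ hV => hV.le)
  obtain ⟨K, hyK, hKU, hK⟩ := local_compact_nhds (U.isOpen.mem_nhds hy)
  exact Opens.mem_sSup.2 ⟨⟨interior K, isOpen_interior⟩,
    wayBelow_of_subset_isCompact hK interior_subset hKU, mem_interior_iff_mem_nhds.2 hyK⟩

theorem opens_continuous_lattice_of_section_general (hY : IsContinuousLattice (Opens Y))
    (i : C(X, Y)) {s : Opens X → Opens Y}
    (hs : @Continuous _ _ (scottTopology (Opens X)) (scottTopology (Opens Y)) s)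
    (hsec : ∀ U : Opens X, Opens.comap i (s U) = U) : IsContinuousLattice (Opens X) :=
  hY.of_leftInverse (scottContinuous_of_sSupHomClass (Opens.comap i))
    (scottContinuous_iff_continuous_scottTopology.2 hs) hsec

end Opens

/-- If the machine-space quotient `q̄ = Opens.comap i` has a continuous section,
then `Opens X` is a continuous lattice, i.e. `X` is locally compact (core-compact). -/
theorem opens_continuous_lattice_of_section {X : Type*} [tX : TopologicalSpace X]
    (G : Set (Set X)) (hG : tX = TopologicalSpace.generateFrom G)
    (hi : Continuous (iMap G))
    (s : Opens X → Opens (↥G → Prop))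
    (hs : letI : TopologicalSpace (Opens X) := scottTopology (Opens X)
      letI : TopologicalSpace (Opens (↥G → Prop)) := scottTopology (Opens (↥G → Prop))
      Continuous s)
    (hsec : ∀ U : Opens X, Opens.comap ⟨iMap G, hi⟩ (s U) = U) :
    ∀ U : Opens X, U = sSup {V : Opens X | WayBelow V U} :=
  opens_continuous_lattice_of_section_general (isContinuousLattice_opens _) ⟨iMap G, hi⟩ hs hsec
end
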